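/- arXiv:1106.6041 — 2 statements merged into one kernel-verified Lean document; each statement's English description precedes it below -/
import Mathlib

section
/- Let ρ : G → O(V) be an orthogonal representation of a finite group G on a finite-dimensional real Euclidean vector space V such that G is generated by elements acting as reflections (orthogonal maps fixing a hyperplane pointwise). Let σ_1, …, σ_n be homogeneous generators of ℝ[V]^G and σ = (σ_1, …, σ_n) : V → ℝ^n. Then for every open U ⊆ ℝ^q and every continuous mapping f : U → ℝ^n with values in σ(V), there exists a continuous mapping f̄ : U → V with σ ∘ f̄ = f. -/
open scoped NNReal

noncomputable section ReflAux

variable {V : Type*} [NormedAddCommGroup V] [InnerProductSpace ℝ V]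

/-- reflection in the hyperplane orthogonal to the unit vector `a` -/
def hypRefl (a x : V) : V := x - (2 * inner ℝ a x) • a

/-- apply a word of reflections -/
def wordAct (l : List V) (x : V) : V := l.foldr (fun a y => hypRefl a y) x

/-- apply the inverse of a word of reflections -/
def wordInv (l : List V) (x : V) : V := l.foldl (fun y a => hypRefl a y) x

lemma hypRefl_hypRefl {a : V} (ha : ‖a‖ = 1) (x : V) : hypRefl a (hypRefl a x) = x := by
  have h : inner ℝ a a = 1 := by rw [real_inner_self_eq_norm_sq, ha]; norm_num
  unfold hypRefl
  simp only [inner_sub_right, inner_smul_right, h]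
  module

lemma hypRefl_inner (a x y : V) : inner ℝ (hypRefl a x) y = inner ℝ x (hypRefl a y) := by
  unfold hypRefl
  simp only [inner_sub_right, inner_smul_right, inner_sub_left, real_inner_smul_left]
  rw [real_inner_comm x a]; ring

lemma hypRefl_self {a : V} (ha : ‖a‖ = 1) : hypRefl a a = -a := by
  have h : inner ℝ a a = 1 := by rw [real_inner_self_eq_norm_sq, ha]; norm_num
  unfold hypRefl
  rw [h]; module

lemma hypRefl_neg (a x : V) : hypRefl a (-x) = - hypRefl a x := by
  unfold hypRefl; rw [inner_neg_right]; module

lemma hypRefl_neg_left (a x : V) : hypRefl (-a) x = hypRefl a x := by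
  unfold hypRefl; rw [inner_neg_left]; module

lemma hypRefl_conj {a : V} (ha : ‖a‖ = 1) (b x : V) :
    hypRefl (hypRefl a b) x = hypRefl a (hypRefl b (hypRefl a x)) := by
  have h1 : hypRefl (hypRefl a b) x = x - (2 * inner ℝ b (hypRefl a x)) • hypRefl a b := by
    conv_lhs => rw [hypRefl]
    rw [hypRefl_inner]
  have h2 : ∀ (y z : V) (c : ℝ), hypRefl a (y - c • z) = hypRefl a y - c • hypRefl a z := by
    intro y z c
    unfold hypRefl
    simp only [inner_sub_right, inner_smul_right]; module
  rw [h1]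
  conv_rhs => rw [show hypRefl b (hypRefl a x) = hypRefl a x - (2 * inner ℝ b (hypRefl a x)) • b from rfl]
  rw [h2, hypRefl_hypRefl ha]

lemma hypRefl_norm {a : V} (ha : ‖a‖ = 1) (x : V) : ‖hypRefl a x‖ = ‖x‖ := by
  have : ‖hypRefl a x‖ ^ 2 = ‖x‖ ^ 2 := by
    rw [← real_inner_self_eq_norm_sq, hypRefl_inner, hypRefl_hypRefl ha, real_inner_self_eq_norm_sq]
  exact (sq_eq_sq₀ (norm_nonneg _) (norm_nonneg _)).1 this

@[simp] lemma wordAct_nil (x : V) : wordAct [] x = x := rfl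
@[simp] lemma wordAct_cons (a : V) (l) (x : V) : wordAct (a :: l) x = hypRefl a (wordAct l x) := rfl
lemma wordAct_append (l k : List V) (x : V) : wordAct (l ++ k) x = wordAct l (wordAct k x) := by
  simp [wordAct]
@[simp] lemma wordInv_nil (x : V) : wordInv [] x = x := rfl
@[simp] lemma wordInv_cons (a : V) (l) (x : V) : wordInv (a :: l) x = wordInv l (hypRefl a x) := rfl

lemma wordInv_neg (l : List V) (x : V) : wordInv l (-x) = - wordInv l x := by
  induction l generalizing x with
  | nil => rfl
  | cons a l ih => simp [hypRefl_neg, ih]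

lemma wordAct_inner (l : List V) (x y : V) :
    inner ℝ (wordAct l x) y = inner ℝ x (wordInv l y) := by
  induction l generalizing y with
  | nil => rfl
  | cons a l ih => simp [hypRefl_inner, ih]

/-- A finite reflection-closed set of unit vectors with a generic vector. -/
structure RootData (Φ : Set V) (v : V) : Prop where
  fin : Φ.Finite
  unit : ∀ a ∈ Φ, ‖a‖ = 1
  refl : ∀ a ∈ Φ, ∀ b ∈ Φ, hypRefl a b ∈ Φ
  gen : ∀ a ∈ Φ, inner ℝ a v ≠ 0

variable {Φ : Set V} {v : V}

lemma RootData.neg (R : RootData Φ v) {a : V} (ha : a ∈ Φ) : -a ∈ Φ := by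
  rw [← hypRefl_self (R.unit a ha)]; exact R.refl a ha a ha

/-- simple roots -/
def IsSimp (Φ : Set V) (v a : V) : Prop :=
  a ∈ Φ ∧ 0 < inner ℝ a v ∧ ∀ b ∈ Φ, 0 < inner ℝ b v → b ≠ a → 0 < inner ℝ (hypRefl a b) v

lemma wordInv_mem (R : RootData Φ v) {l : List V} (hl : ∀ a ∈ l, IsSimp Φ v a) {b : V}
    (hb : b ∈ Φ) : wordInv l b ∈ Φ := by
  induction l generalizing b with
  | nil => exact hb
  | cons a l ih =>
    exact ih (fun c hc => hl c (by simp [hc])) (R.refl a (hl a (by simp)).1 b hb)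

/-- strong exchange -/
lemma exchange (R : RootData Φ v) (l : List V) (hl : ∀ a ∈ l, IsSimp Φ v a) (b : V)
    (hb : b ∈ Φ) (hpos : 0 < inner ℝ b v) (hneg : inner ℝ (wordInv l b) v < 0) :
    ∃ l' : List V, (∀ a ∈ l', IsSimp Φ v a) ∧ l'.length < l.length ∧
      ∀ x, hypRefl b (wordAct l x) = wordAct l' x := by
  induction l generalizing b with
  | nil => simp at hneg; linarith
  | cons a l ih =>
    have ha := hl a (by simp)
    have hl' : ∀ c ∈ l, IsSimp Φ v c := fun c hc => hl c (by simp [hc])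
    by_cases hab : b = a
    · subst hab
      exact ⟨l, hl', by simp, fun x => by simp [hypRefl_hypRefl (R.unit b hb)]⟩
    · obtain ⟨l', h1, h2, h3⟩ := ih hl' (hypRefl a b) (R.refl a ha.1 b hb)
        (ha.2.2 b hb hpos hab) (by simpa using hneg)
      refine ⟨a :: l', ?_, by simpa using h2, ?_⟩
      · intro c hc
        rcases List.mem_cons.1 hc with rfl | hc
        · exact ha
        · exact h1 c hc
      · intro x
        rw [wordAct_cons, wordAct_cons, ← h3, hypRefl_conj (R.unit a ha.1), hypRefl_hypRefl (R.unit a ha.1)]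

/-- closed chamber -/
def Chamber (Φ : Set V) (v : V) : Set V := {x | ∀ a ∈ Φ, 0 < inner ℝ a v → 0 ≤ inner ℝ x a}

lemma simple_unique (R : RootData Φ v) (N : ℕ) : ∀ (l : List V), l.length = N →
    (∀ a ∈ l, IsSimp Φ v a) → ∀ x ∈ Chamber Φ v, wordAct l x ∈ Chamber Φ v →
    wordAct l x = x := by
  induction N using Nat.strong_induction_on with
  | _ N ih =>
  intro l hN hl x hx hgx
  cases l with
  | nil => rfl
  | cons a l =>
    have ha := hl a (by simp)
    have hl' : ∀ c ∈ l, IsSimp Φ v c := fun c hc => hl c (by simp [hc])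
    have hm := wordInv_mem R hl' ha.1
    rcases lt_or_gt_of_ne (R.gen _ hm) with h | h
    · obtain ⟨l', h1, h2, h3⟩ := exchange R l hl' a ha.1 ha.2.1 h
      rw [wordAct_cons, h3] at hgx ⊢
      exact ih l'.length (by simp at hN; omega) l' rfl h1 x hx hgx
    · have e1 := hgx a ha.1 ha.2.1
      have e2 := hx _ hm h
      have e3 : inner ℝ (wordAct (a :: l) x) a = - inner ℝ x (wordInv l a) := by
        rw [wordAct_inner, wordInv_cons, hypRefl_self (R.unit a ha.1), wordInv_neg, inner_neg_right]
      have e4 : inner ℝ a (wordAct (a :: l) x) = 0 := by rw [real_inner_comm]; linarith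
      have e5 : hypRefl a (wordAct (a :: l) x) = wordAct (a :: l) x := by
        conv_lhs => rw [hypRefl, e4]
        simp
      have e6 : hypRefl a (wordAct (a :: l) x) = wordAct l x := by
        rw [wordAct_cons, hypRefl_hypRefl (R.unit a ha.1)]
      rw [← e5, e6] at hgx ⊢
      exact ih l.length (by simp at hN; omega) l rfl hl' x hx hgx

lemma cone_pos {D : Set V} (hD : ∀ a ∈ D, 0 < inner ℝ a v) {z : V}
    (hz : z ∈ Submodule.span ℝ≥0 D) : z = 0 ∨ 0 < inner ℝ z v := by
  induction hz using Submodule.span_induction with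
  | mem x h => exact Or.inr (hD x h)
  | zero => exact Or.inl rfl
  | add x y _ _ hx hy =>
    rcases hx with rfl | hx
    · simpa using hy
    · rcases hy with rfl | hy
      · right; simpa using hx
      · right; rw [inner_add_left]; positivity
  | smul c x _ hx =>
    rcases hx with rfl | hx
    · simp
    · rcases eq_or_ne c 0 with rfl | hc
      · simp
      · right
        rw [NNReal.smul_def, real_inner_smul_left]
        have : 0 < (c : ℝ) := by positivity
        positivity

lemma exists_simple (R : RootData Φ v) : ∃ D : Set V, (∀ a ∈ D, IsSimp Φ v a) ∧
    ∀ b ∈ Φ, 0 < inner ℝ b v → b ∈ Submodule.span ℝ≥0 D := by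
  let P : Set V := {b | b ∈ Φ ∧ 0 < inner ℝ b v}
  have hPf : P.Finite := R.fin.subset fun b hb => hb.1
  let F : Set (Set V) := {D | D ⊆ P ∧ P ⊆ Submodule.span ℝ≥0 D}
  have hF : F.Finite := hPf.finite_subsets.subset fun D hD => hD.1
  obtain ⟨D, hD⟩ := hF.exists_minimal ⟨P, subset_rfl, Submodule.subset_span⟩
  refine ⟨D, ?_, fun b hb hb' => hD.prop.2 ⟨hb, hb'⟩⟩
  intro a ha
  have haP := hD.prop.1 ha
  refine ⟨haP.1, haP.2, ?_⟩
  intro b hb hbpos hba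
  by_contra hcon
  have hm := R.refl a haP.1 b hb
  have hlt : inner ℝ (hypRefl a b) v < 0 := lt_of_le_of_ne (not_lt.1 hcon) (R.gen _ hm)
  have hnP : -hypRefl a b ∈ P := ⟨R.neg hm, by rw [inner_neg_left]; linarith⟩
  have hins : insert a (D \ {a}) = D := by simp [Set.insert_eq_of_mem ha]
  have hDpos : ∀ c ∈ D \ {a}, 0 < inner ℝ c v := fun c hc => (hD.prop.1 hc.1).2
  have h1 := hD.prop.2 (show b ∈ P from ⟨hb, hbpos⟩)
  have h2 := hD.prop.2 hnP
  rw [← hins] at h1 h2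
  obtain ⟨c, z, hz, h1⟩ := Submodule.mem_span_insert.1 h1
  obtain ⟨d, z', hz', h2⟩ := Submodule.mem_span_insert.1 h2
  rw [NNReal.smul_def] at h1 h2
  have key : z + z' = (2 * inner ℝ a b - c - d) • a := by
    have h3 : b - hypRefl a b = (2 * inner ℝ a b) • a := by unfold hypRefl; abel
    have h4 : b - hypRefl a b = (c : ℝ) • a + z + ((d : ℝ) • a + z') := by rw [← h1, ← h2]; abel
    rw [h3] at h4
    have : z + z' = ((c : ℝ) • a + z + ((d : ℝ) • a + z')) - (c : ℝ) • a - (d : ℝ) • a := by abel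
    rw [this, ← h4]; module
  set e := 2 * inner ℝ a b - c - d with he
  rcases lt_or_ge 0 e with hpos | hnon
  · -- then `a` lies in the cone of the others
    have hain : a ∈ Submodule.span ℝ≥0 (D \ {a}) := by
      have : (Real.toNNReal e⁻¹) • (z + z') = a := by
        rw [NNReal.smul_def, key, smul_smul, Real.coe_toNNReal _ (by positivity)]
        simp [inv_mul_cancel₀ hpos.ne']
      have h5 := Submodule.smul_mem _ (Real.toNNReal e⁻¹) (Submodule.add_mem _ hz hz')
      rwa [this] at h5
    have hmem : D \ {a} ∈ F := by
      refine ⟨Set.sdiff_subset.trans hD.prop.1, fun p hp => ?_⟩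
      have hp := hD.prop.2 hp
      have : Submodule.span ℝ≥0 D ≤ Submodule.span ℝ≥0 (D \ {a}) := by
        rw [Submodule.span_le]
        intro x hx
        by_cases hxa : x = a
        · rw [hxa]; exact hain
        · exact Submodule.subset_span ⟨hx, hxa⟩
      exact this hp
    have := hD.le_of_le hmem Set.sdiff_subset ha
    simp at this
  · have hh : inner ℝ z v + inner ℝ z' v ≤ 0 := by
      rw [← inner_add_left, key, real_inner_smul_left]
      exact mul_nonpos_of_nonpos_of_nonneg hnon haP.2.le
    have hz0 : z = 0 := by
      rcases cone_pos hDpos hz with h | h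
      · exact h
      · rcases cone_pos hDpos hz' with h' | h'
        · rw [h', inner_zero_left] at hh; linarith
        · linarith
    apply hba
    rw [hz0, add_zero] at h1
    have hn := R.unit b hb
    rw [h1, norm_smul, R.unit a haP.1] at hn
    simp at hn
    rw [h1, hn]; simp

lemma refl_word (R : RootData Φ v) (b : V) (hb : b ∈ Φ) : ∃ l : List V,
    (∀ a ∈ l, IsSimp Φ v a) ∧ ∀ x, hypRefl b x = wordAct l x := by
  obtain ⟨D, hD, hcone⟩ := exists_simple R
  suffices h : ∀ b ∈ Φ, 0 < inner ℝ b v → ∃ l : List V,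
      (∀ a ∈ l, IsSimp Φ v a) ∧ ∀ x, hypRefl b x = wordAct l x by
    rcases lt_or_gt_of_ne (R.gen b hb) with h' | h'
    · obtain ⟨l, h1, h2⟩ := h (-b) (R.neg hb) (by rw [inner_neg_left]; linarith)
      exact ⟨l, h1, fun x => by rw [← h2, hypRefl_neg_left]⟩
    · exact h b hb h'
  by_contra! hcon
  let B : Set V := {b | b ∈ Φ ∧ 0 < inner ℝ b v ∧ ∀ l : List V,
      (∀ a ∈ l, IsSimp Φ v a) → ∃ x, hypRefl b x ≠ wordAct l x}
  have hBf : B.Finite := R.fin.subset fun b hb => hb.1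
  have hBn : B.Nonempty := by
    obtain ⟨b, h1, h2, h3⟩ := hcon
    exact ⟨b, h1, h2, h3⟩
  obtain ⟨c, hc, hmin⟩ := Set.exists_min_image B (fun b => inner ℝ b v) hBf hBn
  obtain ⟨d, hd, hdc⟩ : ∃ d ∈ D, 0 < inner ℝ d c := by
    by_contra! hle
    have : ∀ z ∈ Submodule.span ℝ≥0 D, inner ℝ z c ≤ 0 := by
      intro z hz
      induction hz using Submodule.span_induction with
      | mem x h => exact hle x h
      | zero => simp
      | add x y _ _ hx hy => rw [inner_add_left]; linarith
      | smul r x _ hx =>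
        rw [NNReal.smul_def, real_inner_smul_left]
        exact mul_nonpos_of_nonneg_of_nonpos r.2 hx
    have := this c (hcone c hc.1 hc.2.1)
    rw [real_inner_self_eq_norm_sq, R.unit c hc.1] at this
    norm_num at this
  have hds := hD d hd
  have hne : c ≠ d := by
    rintro rfl
    obtain ⟨x, hx⟩ := hc.2.2 [c] (by simpa using hds)
    exact hx (by simp)
  have hpos := hds.2.2 c hc.1 hc.2.1 hne
  have hnB : hypRefl d c ∉ B := by
    intro h
    have := hmin _ h
    simp only [hypRefl, inner_sub_left, real_inner_smul_left] at this
    have : 0 < 2 * inner ℝ d c * inner ℝ d v := mul_pos (by linarith) hds.2.1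
    linarith
  have : ∃ l : List V, (∀ a ∈ l, IsSimp Φ v a) ∧ ∀ x, hypRefl (hypRefl d c) x = wordAct l x := by
    by_contra! h
    exact hnB ⟨R.refl d hds.1 c hc.1, hpos, h⟩
  obtain ⟨l, hl, hlx⟩ := this
  obtain ⟨x, hx⟩ := hc.2.2 (d :: (l ++ [d])) (by
    intro a ha
    simp only [List.mem_cons, List.mem_append, List.not_mem_nil, or_false] at ha
    rcases ha with rfl | ha | rfl
    · exact hds
    · exact hl a ha
    · exact hds)
  apply hx
  have hu := R.unit d hds.1
  rw [wordAct_cons, wordAct_append, ← hlx, hypRefl_conj hu]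
  simp [hypRefl_hypRefl hu]

lemma word_simple (R : RootData Φ v) (l : List V) (hl : ∀ a ∈ l, a ∈ Φ) : ∃ l' : List V,
    (∀ a ∈ l', IsSimp Φ v a) ∧ ∀ x, wordAct l x = wordAct l' x := by
  induction l with
  | nil => exact ⟨[], by simp, fun x => rfl⟩
  | cons a l ih =>
    obtain ⟨k, h1, h2⟩ := ih fun c hc => hl c (by simp [hc])
    obtain ⟨k', h3, h4⟩ := refl_word R a (hl a (by simp))
    refine ⟨k' ++ k, ?_, fun x => by rw [wordAct_cons, wordAct_append, h4, h2]⟩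
    intro c hc
    rcases List.mem_append.1 hc with h | h
    · exact h3 c h
    · exact h1 c h

lemma chamber_unique (R : RootData Φ v) (l : List V) (hl : ∀ a ∈ l, a ∈ Φ) (x : V)
    (hx : x ∈ Chamber Φ v) (hy : wordAct l x ∈ Chamber Φ v) : wordAct l x = x := by
  obtain ⟨l', h1, h2⟩ := word_simple R l hl
  rw [h2] at hy ⊢
  exact simple_unique R _ l' rfl h1 x hx hy

end ReflAux

section ReflMain

variable {G : Type*} [Group G] [Fintype G] {m n : ℕ}

lemma hypRefl_eq_imp {V : Type*} [NormedAddCommGroup V] [InnerProductSpace ℝ V] {a b : V}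
    (ha : ‖a‖ = 1) (hb : ‖b‖ = 1) (h : ∀ x, hypRefl a x = hypRefl b x) : b = a ∨ b = -a := by
  have h1 := h b
  rw [hypRefl_self hb, hypRefl] at h1
  have h2 : b = (inner ℝ a b) • a := by
    have : (2 : ℝ) • b = (2 : ℝ) • ((inner ℝ a b) • a) := by
      rw [smul_smul, two_smul]
      have := sub_eq_iff_eq_add.1 h1
      nth_rewrite 1 [this]
      abel
    exact smul_right_injective V (two_ne_zero) this
  have h3 : |(inner ℝ a b : ℝ)| = 1 := by
    have := congrArg norm h2
    rw [norm_smul, ha, hb, mul_one] at this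
    exact this.symm
  rcases (abs_eq zero_le_one).1 h3 with h | h
  · left; rw [h2, h]; simp
  · right; rw [h2, h]; simp

lemma exists_rootData
    (ρ : G →* (EuclideanSpace ℝ (Fin m) ≃ₗᵢ[ℝ] EuclideanSpace ℝ (Fin m)))
    (href : Subgroup.closure {g : G |
        ∃ H : Submodule ℝ (EuclideanSpace ℝ (Fin m)),
          Module.finrank ℝ H + 1 = m ∧ ∀ w ∈ H, ρ g w = w} = ⊤) :
    ∃ (Φ : Set (EuclideanSpace ℝ (Fin m))) (v : EuclideanSpace ℝ (Fin m)), RootData Φ v ∧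
      (∀ a ∈ Φ, ∃ g, ∀ x, ρ g x = hypRefl a x) ∧
      ∀ g, ∃ l : List (EuclideanSpace ℝ (Fin m)), (∀ a ∈ l, a ∈ Φ) ∧ ∀ x, ρ g x = wordAct l x := by
  classical
  let Φ : Set (EuclideanSpace ℝ (Fin m)) := {a | ‖a‖ = 1 ∧ ∃ g, ∀ x, ρ g x = hypRefl a x}
  have hfin : Φ.Finite := by
    have : Φ ⊆ ⋃ g : G, {a | ‖a‖ = 1 ∧ ∀ x, ρ g x = hypRefl a x} := by
      rintro a ⟨h1, g, h2⟩
      exact Set.mem_iUnion.2 ⟨g, h1, h2⟩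
    refine (Set.finite_iUnion fun g => ?_).subset this
    rcases Set.eq_empty_or_nonempty {a | ‖a‖ = 1 ∧ ∀ x, ρ g x = hypRefl a x} with h | ⟨a, h1, h2⟩
    · rw [h]; exact Set.finite_empty
    · refine (Set.toFinite {a, -a}).subset ?_
      rintro b ⟨h3, h4⟩
      exact hypRefl_eq_imp h1 h3 fun x => by rw [← h2, ← h4]
  obtain ⟨v, hv⟩ : ∃ v : EuclideanSpace ℝ (Fin m), ∀ a ∈ Φ, inner ℝ a v ≠ 0 := by
    have : Finite Φ := hfin
    obtain ⟨φ, hφ⟩ := Module.exists_dual_forall_apply_ne_zero (K := ℝ)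
      (fun a : Φ => (a : EuclideanSpace ℝ (Fin m))) (by
        rintro ⟨a, ha⟩ h0
        have := ha.1
        simp only at h0
        rw [h0, norm_zero] at this
        norm_num at this)
    refine ⟨(InnerProductSpace.toDual ℝ _).symm (LinearMap.toContinuousLinearMap φ), ?_⟩
    intro a ha
    rw [real_inner_comm, InnerProductSpace.toDual_symm_apply]
    exact hφ ⟨a, ha⟩
  refine ⟨Φ, v, ⟨hfin, fun a ha => ha.1, ?_, hv⟩, fun a ha => ha.2, ?_⟩
  · rintro a ⟨ha, g, hg⟩ b ⟨hb, h, hh⟩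
    refine ⟨by rw [hypRefl_norm ha, hb], g * h * g, fun x => ?_⟩
    rw [hypRefl_conj ha, ← hg, ← hh, ← hg, map_mul, map_mul]
    rfl
  · intro g
    have hg : g ∈ Subgroup.closure {g : G |
        ∃ H : Submodule ℝ (EuclideanSpace ℝ (Fin m)),
          Module.finrank ℝ H + 1 = m ∧ ∀ w ∈ H, ρ g w = w} := by rw [href]; trivial
    induction hg using Subgroup.closure_induction with
    | mem g hg =>
      obtain ⟨H, hH, hfix⟩ := hg
      have hd : Module.finrank ℝ Hᗮ = 1 := by
        have := H.finrank_add_finrank_orthogonal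
        rw [finrank_euclideanSpace, Fintype.card_fin] at this
        omega
      obtain ⟨u, hu0, hu⟩ := finrank_eq_one_iff'.1 hd
      have hu0' : (u : EuclideanSpace ℝ (Fin m)) ≠ 0 := by simpa using hu0
      set a : EuclideanSpace ℝ (Fin m) := (‖(u : EuclideanSpace ℝ (Fin m))‖⁻¹) • u with ha
      have han : ‖a‖ = 1 := norm_smul_inv_norm hu0'
      have haH : a ∈ Hᗮ := Submodule.smul_mem _ _ u.2
      have hspan : ∀ w ∈ Hᗮ, ∃ c : ℝ, w = c • a := by
        intro w hw
        obtain ⟨c, hc⟩ := hu ⟨w, hw⟩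
        have hc' : c • (u : EuclideanSpace ℝ (Fin m)) = w := congrArg Subtype.val hc
        refine ⟨c * ‖(u : EuclideanSpace ℝ (Fin m))‖, ?_⟩
        rw [ha, smul_smul, mul_assoc, mul_inv_cancel₀ (norm_ne_zero_iff.2 hu0'), mul_one, hc']
      have hga : ρ g a ∈ Hᗮ := by
        rw [Submodule.mem_orthogonal]
        intro w hw
        rw [← hfix w hw, LinearIsometryEquiv.inner_map_map]
        exact (Submodule.mem_orthogonal _ _).1 haH w hw
      obtain ⟨c, hc⟩ := hspan _ hga
      have hdec : ∀ x, ∃ w ∈ H, ∃ t : ℝ, x = w + t • a := by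
        intro x
        obtain ⟨w, hw, z, hz, h⟩ := H.exists_add_mem_mem_orthogonal x
        obtain ⟨t, ht⟩ := hspan z hz
        exact ⟨w, hw, t, by rw [h, ht]⟩
      have hca : |c| = 1 := by
        have := congrArg norm hc
        rw [LinearIsometryEquiv.norm_map, han, norm_smul, han, mul_one] at this
        exact this.symm
      rcases (abs_eq zero_le_one).1 hca with h | h
      · refine ⟨[], by simp, fun x => ?_⟩
        obtain ⟨w, hw, t, rfl⟩ := hdec x
        rw [map_add, map_smul, hfix w hw, hc, h]
        simp
      · have hr : ∀ x, ρ g x = hypRefl a x := by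
          intro x
          obtain ⟨w, hw, t, rfl⟩ := hdec x
          have h1 : inner ℝ a w = 0 := by
            rw [real_inner_comm]; exact (Submodule.mem_orthogonal _ _).1 haH w hw
          have h2 : inner ℝ a a = 1 := by rw [real_inner_self_eq_norm_sq, han]; norm_num
          rw [map_add, map_smul, hfix w hw, hc, h, hypRefl, inner_add_right, h1, inner_smul_right, h2]
          module
        exact ⟨[a], by simpa using ⟨han, g, hr⟩, fun x => by simp [hr]⟩
    | one => exact ⟨[], by simp, fun x => by simp⟩
    | mul g h _ _ hg hh =>
      obtain ⟨l, h1, h2⟩ := hg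
      obtain ⟨k, h3, h4⟩ := hh
      refine ⟨l ++ k, ?_, fun x => ?_⟩
      · intro c hc
        rcases List.mem_append.1 hc with h | h
        · exact h1 c h
        · exact h3 c h
      · rw [wordAct_append, ← h2, ← h4, map_mul]; rfl
    | inv g _ hg =>
      obtain ⟨l, h1, h2⟩ := hg
      refine ⟨l.reverse, by simpa using h1, fun x => ?_⟩
      apply (ρ g).injective
      have e : ρ g (ρ g⁻¹ x) = x := by
        rw [map_inv]; exact (ρ g).apply_symm_apply x
      rw [e, h2]
      clear e h2
      induction l generalizing x with
      | nil => rfl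
      | cons a l ih =>
        rw [List.reverse_cons, wordAct_append, wordAct_cons,
          ← ih (fun c hc => h1 c (by simp [hc])), wordAct_cons, wordAct_nil,
          hypRefl_hypRefl (h1 a (by simp)).1]

lemma norm_poly
    (ρ : G →* (EuclideanSpace ℝ (Fin m) ≃ₗᵢ[ℝ] EuclideanSpace ℝ (Fin m)))
    (σ : Fin n → MvPolynomial (Fin m) ℝ)
    (hgen : ∀ p : MvPolynomial (Fin m) ℝ,
      (∀ g (v : EuclideanSpace ℝ (Fin m)),
        MvPolynomial.eval (fun j => ρ g v j) p = MvPolynomial.eval (fun j => v j) p) →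
      p ∈ Algebra.adjoin ℝ (Set.range σ)) :
    ∃ Q : MvPolynomial (Fin n) ℝ, ∀ x : EuclideanSpace ℝ (Fin m),
      ‖x‖ ^ 2 = MvPolynomial.eval (fun i => MvPolynomial.eval (fun j => x j) (σ i)) Q := by
  have he : ∀ x : EuclideanSpace ℝ (Fin m), MvPolynomial.eval (fun j => x j)
      (∑ j, (MvPolynomial.X j : MvPolynomial (Fin m) ℝ) ^ 2) = ‖x‖ ^ 2 := by
    intro x
    rw [EuclideanSpace.real_norm_sq_eq]
    simp
  have := hgen (∑ j, (MvPolynomial.X j) ^ 2) fun g x => by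
    rw [he, he, LinearIsometryEquiv.norm_map]
  rw [Algebra.adjoin_range_eq_range_aeval] at this
  obtain ⟨Q, hQ⟩ := this
  refine ⟨Q, fun x => ?_⟩
  rw [← he, ← hQ]
  clear hQ he hgen
  induction Q using MvPolynomial.induction_on with
  | C a => simp
  | add p q hp hq => simp_all
  | mul_X p i hp => simp_all

lemma separate
    (ρ : G →* (EuclideanSpace ℝ (Fin m) ≃ₗᵢ[ℝ] EuclideanSpace ℝ (Fin m)))
    (σ : Fin n → MvPolynomial (Fin m) ℝ)
    (hgen : ∀ p : MvPolynomial (Fin m) ℝ,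
      (∀ g (v : EuclideanSpace ℝ (Fin m)),
        MvPolynomial.eval (fun j => ρ g v j) p = MvPolynomial.eval (fun j => v j) p) →
      p ∈ Algebra.adjoin ℝ (Set.range σ))
    (x y : EuclideanSpace ℝ (Fin m))
    (hxy : ∀ i, MvPolynomial.eval (fun j => x j) (σ i) = MvPolynomial.eval (fun j => y j) (σ i)) :
    ∃ g, ρ g x = y := by
  let P : MvPolynomial (Fin m) ℝ :=
    ∏ g : G, ∑ j, (MvPolynomial.X j - MvPolynomial.C (ρ g x j)) ^ 2
  have he : ∀ z : EuclideanSpace ℝ (Fin m), MvPolynomial.eval (fun j => z j) P =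
      ∏ g : G, ‖z - ρ g x‖ ^ 2 := by
    intro z
    simp only [P, map_prod]
    refine Finset.prod_congr rfl fun g _ => ?_
    rw [EuclideanSpace.real_norm_sq_eq]
    simp
  have hP := hgen P fun h z => by
    rw [he, he]
    rw [← Equiv.prod_comp (Equiv.mulLeft h)]
    refine Finset.prod_congr rfl fun g _ => ?_
    have : ρ (h * g) x = ρ h (ρ g x) := by rw [map_mul]; rfl
    rw [Equiv.coe_mulLeft, this, ← map_sub, LinearIsometryEquiv.norm_map]
  have hall : ∀ p ∈ Algebra.adjoin ℝ (Set.range σ),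
      MvPolynomial.eval (fun j => x j) p = MvPolynomial.eval (fun j => y j) p := by
    intro p hp
    induction hp using Algebra.adjoin_induction with
    | mem p hp => obtain ⟨i, rfl⟩ := hp; exact hxy i
    | algebraMap r => simp [MvPolynomial.algebraMap_eq]
    | add p q _ _ hp hq => simp [hp, hq]
    | mul p q _ _ hp hq => simp [hp, hq]
  have h1 := hall P hP
  rw [he, he, Finset.prod_eq_zero (Finset.mem_univ (1 : G)) (by simp)] at h1
  obtain ⟨g, -, hg⟩ := Finset.prod_eq_zero_iff.1 h1.symm
  refine ⟨g, ?_⟩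
  have : y - ρ g x = 0 := by simpa using hg
  exact (sub_eq_zero.1 this).symm

end ReflMain

/-- If a finite group `G` acting orthogonally on `V = ℝ^m` is generated by elements acting as
reflections (orthogonal maps fixing a hyperplane pointwise), then any continuous mapping
`f : U → σ(V) ⊆ ℝ^n` on an open set `U ⊆ ℝ^q` admits a continuous lift `fbar : U → V`. -/
theorem reflection_group_continuous_lift
    (G : Type*) [Group G] [Fintype G] (m n : ℕ)
    (ρ : G →* (EuclideanSpace ℝ (Fin m) ≃ₗᵢ[ℝ] EuclideanSpace ℝ (Fin m)))
    -- G is generated by elements acting as reflections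
    (href : Subgroup.closure {g : G |
        ∃ H : Submodule ℝ (EuclideanSpace ℝ (Fin m)),
          Module.finrank ℝ H + 1 = m ∧ ∀ w ∈ H, ρ g w = w} = ⊤)
    (σ : Fin n → MvPolynomial (Fin m) ℝ)
    (deg : Fin n → ℕ)
    (hhom : ∀ i, (σ i).IsHomogeneous (deg i))
    (hinv : ∀ i g (v : EuclideanSpace ℝ (Fin m)),
      MvPolynomial.eval (fun j => ρ g v j) (σ i) = MvPolynomial.eval (fun j => v j) (σ i))
    (hgen : ∀ p : MvPolynomial (Fin m) ℝ,
      (∀ g (v : EuclideanSpace ℝ (Fin m)),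
        MvPolynomial.eval (fun j => ρ g v j) p = MvPolynomial.eval (fun j => v j) p) →
      p ∈ Algebra.adjoin ℝ (Set.range σ))
    (S : EuclideanSpace ℝ (Fin m) → EuclideanSpace ℝ (Fin n))
    (hS : ∀ v i, S v i = MvPolynomial.eval (fun j => v j) (σ i))
    (q : ℕ) (U : Set (EuclideanSpace ℝ (Fin q))) (hU : IsOpen U)
    (f : EuclideanSpace ℝ (Fin q) → EuclideanSpace ℝ (Fin n))
    (hf : ContinuousOn f U)
    (hfval : ∀ x ∈ U, f x ∈ Set.range S) :
    ∃ fbar : EuclideanSpace ℝ (Fin q) → EuclideanSpace ℝ (Fin m),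
      ContinuousOn fbar U ∧ ∀ x ∈ U, S (fbar x) = f x := by
  classical
  obtain ⟨Φ, v, R, hΦ, hrep⟩ := exists_rootData ρ href
  -- every orbit meets the chamber
  have hmeet : ∀ x, ∃ g, ρ g x ∈ Chamber Φ v := by
    intro x
    obtain ⟨g, -, hg⟩ := Finset.exists_max_image (Finset.univ : Finset G)
      (fun g => inner ℝ (ρ g x) v) ⟨1, Finset.mem_univ _⟩
    refine ⟨g, fun a ha hpos => ?_⟩
    obtain ⟨h, hh⟩ := hΦ a ha
    have := hg (h * g) (Finset.mem_univ _)
    have e : ρ (h * g) x = hypRefl a (ρ g x) := by rw [map_mul, ← hh]; rfl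
    rw [e, hypRefl, inner_sub_left, real_inner_smul_left] at this
    rw [real_inner_comm]
    by_contra! hneg
    have : 2 * inner ℝ a (ρ g x) * inner ℝ a v < 0 :=
      mul_neg_of_neg_of_pos (by linarith) hpos
    linarith
  have huniq : ∀ x ∈ Chamber Φ v, ∀ y ∈ Chamber Φ v, (∃ g, ρ g x = y) → y = x := by
    rintro x hx y hy ⟨g, rfl⟩
    obtain ⟨l, hl, hlx⟩ := hrep g
    rw [hlx] at hy ⊢
    exact chamber_unique R l hl x hx hy
  have hSinv : ∀ g x, S (ρ g x) = S x := by
    intro g x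
    ext i
    rw [hS, hS, hinv]
  have hSsep : ∀ x y, S x = S y → ∃ g, ρ g x = y := by
    intro x y hxy
    exact separate ρ σ hgen x y fun i => by rw [← hS, ← hS, hxy]
  obtain ⟨Q, hQ⟩ := norm_poly ρ σ hgen
  have hQ' : ∀ x, ‖x‖ ^ 2 = MvPolynomial.eval (fun i => S x i) Q := by
    intro x; rw [hQ]; simp only [hS]
  have hScont : Continuous S := by
    have : S = fun x => WithLp.toLp 2 (fun i => MvPolynomial.eval (fun j => x j) (σ i)) := by
      funext x; ext i; exact hS x i
    rw [this]
    refine (PiLp.continuous_toLp 2 _).comp (continuous_pi fun i => ?_)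
    exact (MvPolynomial.continuous_eval (σ i)).comp (PiLp.continuous_ofLp 2 _)
  have hCclosed : IsClosed (Chamber Φ v) := by
    have : Chamber Φ v = ⋂ a ∈ {a | a ∈ Φ ∧ 0 < inner ℝ a v}, {x | 0 ≤ inner ℝ x a} := by
      ext x; simp [Chamber]
    rw [this]
    exact isClosed_biInter fun a _ => isClosed_le continuous_const (by fun_prop)
  have hex : ∀ x, ∃ w, x ∈ U → w ∈ Chamber Φ v ∧ S w = f x := by
    intro x
    by_cases hx : x ∈ U
    · obtain ⟨w, hw⟩ := hfval x hx
      obtain ⟨g, hg⟩ := hmeet w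
      exact ⟨ρ g w, fun _ => ⟨hg, by rw [hSinv, hw]⟩⟩
    · exact ⟨0, fun h => absurd h hx⟩
  choose F hF using hex
  refine ⟨F, ?_, fun x hx => (hF x hx).2⟩
  intro x₀ hx₀
  let q' : EuclideanSpace ℝ (Fin n) → ℝ := fun y => MvPolynomial.eval (fun i => y i) Q
  have hq' : Continuous q' :=
    (MvPolynomial.continuous_eval Q).comp (PiLp.continuous_ofLp 2 _)
  have hfx := hf x₀ hx₀
  have hqf : Filter.Tendsto (fun x => q' (f x)) (nhdsWithin x₀ U) (nhds (q' (f x₀))) :=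
    (hq'.tendsto _).comp hfx
  have hbd : ∀ᶠ x in nhdsWithin x₀ U, F x ∈
      Metric.closedBall (0 : EuclideanSpace ℝ (Fin m)) (q' (f x₀) + 1 + 1) := by
    filter_upwards [hqf.eventually_lt_const (lt_add_one _), self_mem_nhdsWithin] with x h1 hx
    have h2 : ‖F x‖ ^ 2 = q' (f x) := by rw [hQ', (hF x hx).2]
    rw [mem_closedBall_zero_iff]
    nlinarith [sq_nonneg (‖F x‖ - 1)]
  refine (isCompact_closedBall _ _).tendsto_nhds_of_unique_mapClusterPt hbd ?_
  intro y _ hy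
  have hyC : y ∈ Chamber Φ v := by
    refine hCclosed.mem_of_mapClusterPt hy ?_
    filter_upwards [self_mem_nhdsWithin] with x hx using (hF x hx).1
  have hyS : S y = f x₀ := by
    have h1 : MapClusterPt (S y) (nhdsWithin x₀ U) (S ∘ F) :=
      hy.continuousAt_comp hScont.continuousAt
    have h2 : Filter.Tendsto (S ∘ F) (nhdsWithin x₀ U) (nhds (f x₀)) := by
      refine hfx.congr' ?_
      filter_upwards [self_mem_nhdsWithin] with x hx using ((hF x hx).2).symm
    exact (eq_of_nhds_neBot (h1.clusterPt.mono h2)).symm ▸ rfl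
  exact huniq _ (hF x₀ hx₀).1 _ hyC (hSsep _ _ (by rw [hyS, (hF x₀ hx₀).2]))
end

section
/- Let U ⊆ ℝ^q be open and let f : U → ℝ^m be a mapping such that for every C^∞ curve c : ℝ → U the composition f ∘ c : ℝ → ℝ^m is locally Lipschitz. Then f is locally Lipschitz (Boman's theorem for Lipschitz mappings). -/
open scoped ContDiff in
lemma boman_bd (g : ℝ → ℝ) (hg : ContDiff ℝ ∞ g) (hs : HasCompactSupport g) (n : ℕ) :
    ∃ M : ℝ, 0 < M ∧ ∀ k ≤ n, ∀ t, ‖iteratedFDeriv ℝ k g t‖ ≤ M := by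
  have h : ∀ k : ℕ, ∃ C : ℝ, ∀ t, ‖iteratedFDeriv ℝ k g t‖ ≤ C := fun k =>
    (hs.iteratedFDeriv k).exists_bound_of_continuous
      (hg.continuous_iteratedFDeriv (by exact_mod_cast le_top))
  choose C hC using h
  refine ⟨∑ k ∈ Finset.range (n+1), |C k| + 1, by positivity, fun k hk t => ?_⟩
  have := Finset.single_le_sum (f := fun k => |C k|) (fun i _ => abs_nonneg _)
    (Finset.mem_range.2 (Nat.lt_succ_of_le hk))
  have h2 := hC k t
  have h3 := le_abs_self (C k)
  linarith

open scoped ContDiff in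
lemma boman_smul {E : Type*} [NormedAddCommGroup E] [NormedSpace ℝ E]
    (g : ℝ → ℝ) (hg : ContDiff ℝ ∞ g) (u : E) (k : ℕ) (t : ℝ) :
    ‖iteratedFDeriv ℝ k (fun t => g t • u) t‖ ≤ ‖u‖ * ‖iteratedFDeriv ℝ k g t‖ := by
  have := (ContinuousLinearMap.toSpanSingleton ℝ u).norm_iteratedFDeriv_comp_left
    (f := g) (x := t) (N := ∞) (n := k) hg.contDiffAt (by exact_mod_cast le_top)
  simpa [Function.comp_def] using this

/-- The plateau function around `2^{-n}`. -/
noncomputable def bomanBump (n : ℕ) : ContDiffBump ((1/2 : ℝ)^n) :=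
  ⟨(1/2)^n/8, (1/2)^n/4, by positivity, by
    have : (0:ℝ) < (1/2)^n := by positivity
    linarith⟩

lemma bomanBump_one (n : ℕ) (t : ℝ) (ht : |t - (1/2)^n| ≤ (1/2)^n/8) : bomanBump n t = 1 :=
  (bomanBump n).one_of_mem_closedBall (by simpa [Real.dist_eq, bomanBump] using ht)

lemma bomanBump_zero (n j : ℕ) (hj : j ≠ n) (t : ℝ) (ht : |t - (1/2)^n| ≤ (1/2)^n/8) :
    bomanBump j t = 0 := by
  apply (bomanBump j).zero_of_le_dist
  have hn : (0:ℝ) < (1/2)^n := by positivity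
  have hj0 : (0:ℝ) < (1/2)^j := by positivity
  obtain ⟨h1, h2⟩ := abs_le.1 ht
  change (1/2:ℝ)^j/4 ≤ |t - (1/2)^j|
  rcases lt_or_gt_of_ne hj with h | h
  · have : (1/2:ℝ)^n ≤ (1/2)^(j+1) := pow_le_pow_of_le_one (by norm_num) (by norm_num) h
    rw [pow_succ] at this
    rw [abs_sub_comm]
    refine le_trans ?_ (le_abs_self _)
    linarith
  · have : (1/2:ℝ)^j ≤ (1/2)^(n+1) := pow_le_pow_of_le_one (by norm_num) (by norm_num) h
    rw [pow_succ] at this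
    refine le_trans ?_ (le_abs_self _)
    linarith

/-- **Boman's theorem for Lipschitz mappings.** If `f : U → ℝ^m` (with `U ⊆ ℝ^q` open) is
locally Lipschitz along every `C^∞`-curve in `U`, then `f` is locally Lipschitz. -/
theorem boman_locally_lipschitz
    (q m : ℕ) (U : Set (EuclideanSpace ℝ (Fin q))) (hU : IsOpen U)
    (f : EuclideanSpace ℝ (Fin q) → EuclideanSpace ℝ (Fin m))
    (hf : ∀ c : ℝ → EuclideanSpace ℝ (Fin q), ContDiff ℝ (⊤ : ℕ∞) c → (∀ t, c t ∈ U) →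
      ∀ t : ℝ, ∃ s : Set ℝ, s ∈ nhds t ∧ ∃ K : NNReal, LipschitzOnWith K (f ∘ c) s) :
    ∀ x ∈ U, ∃ s : Set (EuclideanSpace ℝ (Fin q)),
      s ⊆ U ∧ s ∈ nhds x ∧ ∃ K : NNReal, LipschitzOnWith K f s := by
  intro x hx
  by_contra hcon
  obtain ⟨δ, hδ, hball⟩ := Metric.isOpen_iff.1 hU x hx
  -- bad pairs at every scale, with every constant
  have hbad : ∀ ρ : ℝ, 0 < ρ → ∀ K : ℝ, 0 ≤ K → ∃ a b, ‖a - x‖ < ρ ∧ ‖b - x‖ < ρ ∧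
      K * ‖b - a‖ < ‖f b - f a‖ := by
    intro ρ hρ K hK
    by_contra hno
    push Not at hno
    apply hcon
    refine ⟨Metric.ball x (min ρ δ),
      (Metric.ball_subset_ball (min_le_right _ _)).trans hball,
      Metric.ball_mem_nhds x (lt_min hρ hδ), K.toNNReal, ?_⟩
    apply LipschitzOnWith.of_dist_le_mul
    intro b hb a ha
    rw [Real.coe_toNNReal K hK, dist_eq_norm, dist_eq_norm]
    rw [mem_ball_iff_norm] at ha hb
    exact hno a b (ha.trans_le (min_le_left _ _)) (hb.trans_le (min_le_left _ _))
  set χ : ℕ → ℝ → ℝ := fun n t => bomanBump n t * (t - (1/2)^n) with hχ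
  have hφc : ∀ n, ContDiff ℝ (⊤ : ℕ∞) (fun t => bomanBump n t) := fun n => (bomanBump n).contDiff
  have hχc : ∀ n, ContDiff ℝ (⊤ : ℕ∞) (χ n) := fun n =>
    (hφc n).mul (contDiff_id.sub contDiff_const)
  have hM : ∀ n, ∃ M : ℝ, 0 < M ∧ ∀ k ≤ n, ∀ t,
      ‖iteratedFDeriv ℝ k (fun t => bomanBump n t) t‖ ≤ M ∧ ‖iteratedFDeriv ℝ k (χ n) t‖ ≤ M := by
    intro n
    obtain ⟨M1, h1, h1'⟩ := boman_bd _ (hφc n) (bomanBump n).hasCompactSupport n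
    obtain ⟨M2, h2, h2'⟩ := boman_bd _ (hχc n) ((bomanBump n).hasCompactSupport.mul_right) n
    exact ⟨M1 + M2, by positivity, fun k hk t =>
      ⟨by linarith [h1' k hk t], by linarith [h2' k hk t]⟩⟩
  choose M hM0 hM using hM
  set ε : ℕ → ℝ := fun n => δ * (1/2)^n / (16 * M n) with hε
  have hε0 : ∀ n, 0 < ε n := fun n => by have := hM0 n; positivity
  have hεM : ∀ n, 2 * (M n * ε n) = δ / 8 * (1/2)^n := fun n => by
    have := hM0 n
    simp only [hε]; field_simp; norm_num
  choose a b ha hb hab using fun n : ℕ => hbad (ε n * (1/2)^n / 32)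
    (by have := hε0 n; positivity) (n / ε n) (by have := hε0 n; positivity)
  have hne : ∀ n, 0 < ‖b n - a n‖ := by
    intro n
    rw [norm_pos_iff]
    intro h0
    have := hab n
    rw [sub_eq_zero.1 h0] at this
    simp at this
  set v : ℕ → EuclideanSpace ℝ (Fin q) := fun n => (ε n / ‖b n - a n‖) • (b n - a n) with hv
  have hvn : ∀ n, ‖v n‖ = ε n := fun n => by
    have := hne n
    simp only [hv, norm_smul, norm_div, norm_norm, Real.norm_of_nonneg (hε0 n).le]
    field_simp
  have hp1 : ∀ n, ((1:ℝ)/2)^n ≤ 1 := fun n => pow_le_one₀ (by norm_num) (by norm_num)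
  have hun : ∀ n, ‖a n - x‖ ≤ ε n := fun n => by
    have h1 := ha n
    have h2 := mul_le_mul_of_nonneg_left (hp1 n) (hε0 n).le
    have := hε0 n
    linarith
  set g : ℕ → ℝ → EuclideanSpace ℝ (Fin q) :=
    fun n t => bomanBump n t • (a n - x) + χ n t • v n with hg
  have hgc : ∀ n, ContDiff ℝ (⊤ : ℕ∞) (g n) := fun n =>
    ((hφc n).smul contDiff_const).add ((hχc n).smul contDiff_const)
  have hgb : ∀ n, ∀ k ≤ n, ∀ t, ‖iteratedFDeriv ℝ k (g n) t‖ ≤ δ / 8 * (1/2)^n := by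
    intro n k hk t
    have e : g n = (fun t => bomanBump n t • (a n - x)) + (fun t => χ n t • v n) := rfl
    rw [e, iteratedFDeriv_add_apply]
    rotate_left
    · exact (((hφc n).smul contDiff_const).of_le (by exact_mod_cast le_top)).contDiffAt
    · exact (((hχc n).smul contDiff_const).of_le (by exact_mod_cast le_top)).contDiffAt
    refine (norm_add_le _ _).trans ?_
    have h1 := boman_smul _ (hφc n) (a n - x) k t
    have h2 := boman_smul _ (hχc n) (v n) k t
    have h3 := mul_le_mul (hun n) (hM n k hk t).1 (norm_nonneg _) (hε0 n).le
    have h4 := mul_le_mul (hvn n).le (hM n k hk t).2 (norm_nonneg _) (hε0 n).le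
    rw [← hεM n]
    linarith
  have hg0 : ∀ n t, ‖g n t‖ ≤ δ / 8 * (1/2)^n := fun n t => by
    simpa using hgb n 0 (Nat.zero_le _) t
  have hsum : HasSum (fun n : ℕ => δ / 8 * (1/2:ℝ)^n) (δ / 8 * 2) :=
    hasSum_geometric_two.mul_left _
  set c : ℝ → EuclideanSpace ℝ (Fin q) := fun t => x + ∑' n, g n t with hc
  have hcc : ContDiff ℝ (⊤ : ℕ∞) c := by
    apply contDiff_const.add
    apply contDiff_tsum_of_eventually (v := fun _ n => δ / 8 * (1/2)^n) hgc
    · intro k _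
      exact hsum.summable
    · intro k _
      rw [Nat.cofinite_eq_atTop]
      filter_upwards [Filter.eventually_ge_atTop k] with n hn t
      exact hgb n k hn t
  have hcU : ∀ t, c t ∈ U := by
    intro t
    apply hball
    rw [mem_ball_iff_norm]
    have := tsum_of_norm_bounded hsum (fun n => hg0 n t)
    simp only [hc, add_sub_cancel_left]
    linarith
  have hcn : ∀ n t, |t - (1/2)^n| ≤ (1/2)^n/8 → c t = a n + (t - (1/2)^n) • v n := by
    intro n t ht
    have h1 : ∑' j, g j t = g n t := by
      apply tsum_eq_single
      intro j hj
      simp [hg, hχ, bomanBump_zero n j hj t ht]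
    change x + ∑' j, g j t = _
    rw [h1]
    simp only [hg, hχ, bomanBump_one n t ht, one_smul, one_mul]
    abel
  obtain ⟨s, hs, K, hK⟩ := hf c hcc hcU 0
  obtain ⟨η, hη, hηs⟩ := Metric.mem_nhds_iff.1 hs
  obtain ⟨n1, hn1⟩ := exists_pow_lt_of_lt_one (half_pos hη) (by norm_num : (1/2:ℝ) < 1)
  obtain ⟨n2, hn2⟩ := exists_nat_ge (K : ℝ)
  set n := max n1 n2
  have hpn : ((1:ℝ)/2)^n < η / 2 :=
    (pow_le_pow_of_le_one (by norm_num) (by norm_num) (le_max_left _ _)).trans_lt hn1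
  have hnK : (K:ℝ) ≤ n := hn2.trans (by exact_mod_cast le_max_right n1 n2)
  have hp0 : (0:ℝ) < (1/2)^n := by positivity
  set τ : ℝ := ‖b n - a n‖ / ε n with hτ
  have hτ0 : 0 < τ := div_pos (hne n) (hε0 n)
  have hτ1 : τ ≤ (1/2)^n / 8 := by
    rw [hτ, div_le_iff₀ (hε0 n)]
    have h1 : ‖b n - a n‖ ≤ ‖b n - x‖ + ‖a n - x‖ := by
      have := norm_sub_le (b n - x) (a n - x)
      simpa using this
    have h2 := mul_pos (hε0 n) hp0
    linarith [ha n, hb n]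
  have hca : c ((1/2)^n) = a n := by
    rw [hcn n _ (by rw [sub_self, abs_zero]; positivity)]; simp
  have hcb : c ((1/2)^n + τ) = b n := by
    rw [hcn n _ (by rw [add_sub_cancel_left, abs_of_pos hτ0]; exact hτ1)]
    have h1 := (hε0 n).ne'
    have h2 := (hne n).ne'
    have h3 : τ * (ε n / ‖b n - a n‖) = 1 := by rw [hτ]; field_simp
    rw [add_sub_cancel_left, hv, smul_smul, h3, one_smul]
    abel
  have hfin := hK.dist_le_mul ((1/2)^n + τ) (hηs (by
      rw [mem_ball_iff_norm, sub_zero, Real.norm_of_nonneg (by positivity)]; linarith))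
    ((1/2)^n) (hηs (by
      rw [mem_ball_iff_norm, sub_zero, Real.norm_of_nonneg (by positivity)]; linarith))
  rw [Function.comp_apply, Function.comp_apply, hca, hcb, dist_eq_norm, dist_eq_norm,
    add_sub_cancel_left, Real.norm_of_nonneg hτ0.le] at hfin
  have h5 := hab n
  have h6 : (n:ℝ) / ε n * ‖b n - a n‖ = n * τ := by rw [hτ]; ring
  rw [h6] at h5
  have h7 := mul_le_mul_of_nonneg_right hnK hτ0.le
  linarith
end
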